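/- Let R be a commutative ring, A a commutative R-algebra, and α ∈ A. The assignment sending an α-derivation ∂ of A over R to the map s : A → E^α(A), s(x) = x + ∂(x)·T, is well defined (each such s is an R-algebra homomorphism with π₀∘s = id_A) and is a bijection from the set of α-derivations of A over R onto the set of R-algebra homomorphisms s : A → E^α(A) satisfying π₀∘s = id_A. -/

import Mathlib

/-- An `α`-derivation of a commutative `R`-algebra `A` over `R`. -/
structure AlphaDerivation (R A : Type*) [CommRing R] [CommRing A] [Algebra R A]
    (α : A) where
  toFun : A → A
  map_add' : ∀ x y : A, toFun (x + y) = toFun x + toFun y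
  map_smul' : ∀ (r : R) (x : A), toFun (r • x) = r • toFun x
  map_one' : toFun 1 = 0
  leibniz' : ∀ x y : A, toFun (x * y) =
    toFun x * y + x * toFun y + α * (toFun x * toFun y)

/-- The ideal `(T² − α·T)` of `A[T]`. -/
noncomputable def twIdeal {A : Type*} [CommRing A] (α : A) : Ideal (Polynomial A) :=
  Ideal.span {Polynomial.X ^ 2 - Polynomial.C α * Polynomial.X}

/-- The twisted extension `E^α(A) = A[T]/(T² − α·T)`. -/
abbrev TwExt {A : Type*} [CommRing A] (α : A) : Type _ :=
  Polynomial A ⧸ twIdeal α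

/-- The augmentation `π₀ : E^α(A) → A` determined by `T ↦ 0`. -/
noncomputable def piZero {A : Type*} [CommRing A] (α : A) : TwExt α →+* A :=
  Ideal.Quotient.lift (twIdeal α) (Polynomial.evalRingHom 0) (by
    intro a ha
    obtain ⟨c, rfl⟩ := Ideal.mem_span_singleton'.mp ha
    simp)

/-!
An element of `E^α(A)` is uniquely of the form `a + bT`, so `E^α(A)` is the quadratic algebra over
`A` generated by `ω` with `ω² = αω`, and `π₀` reads off the coefficient of `1`. A map
`x ↦ x + ∂(x) ω` preserves products exactly when the `ω`-coefficient of
`(x + ∂(x) ω) (y + ∂(y) ω)` is `∂(xy)`, and this coefficient is `∂(x) y + x ∂(y) + α ∂(x) ∂(y)`.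
-/

namespace TwExt

open Polynomial QuadraticAlgebra

variable {A : Type*} [CommRing A] (α : A)

variable {α} in
theorem aeval_omega_eq_zero_of_mem {p : A[X]} (hp : p ∈ twIdeal α) :
    aeval (ω : QuadraticAlgebra A 0 α) p = 0 := by
  obtain ⟨q, rfl⟩ := Ideal.mem_span_singleton'.mp hp
  simp [pow_two, omega_mul_omega_eq_algebraMap]

theorem mk_X_mul_mk_X :
    Ideal.Quotient.mk (twIdeal α) X * Ideal.Quotient.mk (twIdeal α) X =
      (0 : A) • 1 + α • Ideal.Quotient.mk (twIdeal α) X := by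
  have hX : Ideal.Quotient.mk (twIdeal α) (X ^ 2) = Ideal.Quotient.mk (twIdeal α) (C α * X) :=
    Ideal.Quotient.eq.mpr (Ideal.mem_span_singleton_self _)
  rw [zero_smul, zero_add, ← map_mul, ← pow_two, hX, ← smul_eq_C_mul]
  rfl

/-- The homomorphism from `E^α(A)` to the free quadratic `A`-algebra with basis `1, ω` and
`ω² = αω` that sends the class of `T` to `ω`. -/
noncomputable def toQuadraticAlgebra : TwExt α →ₐ[A] QuadraticAlgebra A 0 α :=
  Ideal.Quotient.liftₐ (twIdeal α) (aeval ω) fun _ => aeval_omega_eq_zero_of_mem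

theorem toQuadraticAlgebra_mk (p : A[X]) :
    toQuadraticAlgebra α (Ideal.Quotient.mk (twIdeal α) p) = aeval ω p :=
  rfl

/-- The identification of `E^α(A)` with the free quadratic `A`-algebra with basis `1, ω` and
`ω² = αω`; it provides coordinates `re`, `im` on `E^α(A)`. -/
noncomputable def equivQuadraticAlgebra : TwExt α ≃ₐ[A] QuadraticAlgebra A 0 α :=
  AlgEquiv.ofAlgHom (toQuadraticAlgebra α)
    (QuadraticAlgebra.lift ⟨Ideal.Quotient.mk (twIdeal α) X, mk_X_mul_mk_X α⟩)
    (by ext <;> simp [toQuadraticAlgebra_mk])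
    (Ideal.Quotient.algHom_ext A <| Polynomial.algHom_ext <| by simp [toQuadraticAlgebra_mk])

theorem equivQuadraticAlgebra_symm_apply (z : QuadraticAlgebra A 0 α) :
    (equivQuadraticAlgebra α).symm z =
      Ideal.Quotient.mk (twIdeal α) (C z.re + C z.im * X) := by
  rw [AlgEquiv.symm_apply_eq, equivQuadraticAlgebra, AlgEquiv.ofAlgHom_apply,
    toQuadraticAlgebra_mk]
  ext <;> simp

theorem piZero_equivQuadraticAlgebra_symm (z : QuadraticAlgebra A 0 α) :
    piZero α ((equivQuadraticAlgebra α).symm z) = z.re := by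
  simp [equivQuadraticAlgebra_symm_apply, piZero]

end TwExt

namespace AlphaDerivation

variable {R A : Type*} [CommRing R] [CommRing A] [Algebra R A] {α : A}

/-- The algebra homomorphism `x ↦ x + ∂(x) ω` attached to an `α`-derivation `∂`, with `E^α(A)`
presented as a quadratic algebra. -/
def toQuadraticAlgHom (D : AlphaDerivation R A α) : A →ₐ[R] QuadraticAlgebra A 0 α :=
  AlgHom.ofLinearMap
    { toFun x := ⟨x, D.toFun x⟩
      map_add' x y := QuadraticAlgebra.ext rfl (D.map_add' x y)
      map_smul' r x := QuadraticAlgebra.ext rfl (D.map_smul' r x) }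
    (QuadraticAlgebra.ext rfl D.map_one')
    fun x y => by
      change (⟨x * y, D.toFun (x * y)⟩ : QuadraticAlgebra A 0 α) =
        ⟨x, D.toFun x⟩ * ⟨y, D.toFun y⟩
      rw [QuadraticAlgebra.mk_mul_mk, D.leibniz']
      congr 1 <;> ring

/-- The `α`-derivation formed by the `ω`-coefficients of an algebra homomorphism
`s : A → E^α(A)` splitting `π₀`, with `E^α(A)` presented as a quadratic algebra. -/
def ofQuadraticAlgHom (s : A →ₐ[R] QuadraticAlgebra A 0 α) (hs : ∀ x, (s x).re = x) :
    AlphaDerivation R A α where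
  toFun x := (s x).im
  map_add' x y := by rw [map_add, QuadraticAlgebra.im_add]
  map_smul' r x := by rw [map_smul, QuadraticAlgebra.im_smul]
  map_one' := by rw [map_one, QuadraticAlgebra.im_one]
  leibniz' x y := by
    rw [map_mul, QuadraticAlgebra.im_mul, hs, hs]
    ring

/-- The correspondence between `α`-derivations of `A` and algebra homomorphisms splitting `π₀`,
with `E^α(A)` presented as a quadratic algebra. -/
def equivQuadraticSections :
    AlphaDerivation R A α ≃
      {s : A →ₐ[R] QuadraticAlgebra A 0 α // ∀ x, (s x).re = x} where
  toFun D := ⟨D.toQuadraticAlgHom, fun _ => rfl⟩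
  invFun s := ofQuadraticAlgHom s.1 s.2
  left_inv _ := rfl
  right_inv s := Subtype.ext <| AlgHom.ext fun x => QuadraticAlgebra.ext (s.2 x).symm rfl

/-- The correspondence between an `α`-derivation `∂` and the section `x ↦ x + ∂(x) T` of `π₀`. -/
noncomputable def equivSections :
    AlphaDerivation R A α ≃
      {s : A →ₐ[R] TwExt α // (piZero α).comp s.toRingHom = RingHom.id A} :=
  equivQuadraticSections.trans <|
    (AlgEquiv.refl.arrowCongr
      ((TwExt.equivQuadraticAlgebra α).symm.restrictScalars R)).subtypeEquiv fun s => by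
        simp [RingHom.ext_iff, TwExt.piZero_equivQuadraticAlgebra_symm]

theorem equivSections_apply (D : AlphaDerivation R A α) (x : A) :
    (equivSections D).1 x = Ideal.Quotient.mk (twIdeal α)
      (Polynomial.C x + Polynomial.C (D.toFun x) * Polynomial.X) :=
  TwExt.equivQuadraticAlgebra_symm_apply α ⟨x, D.toFun x⟩

theorem equivSections_eq_iff (D : AlphaDerivation R A α)
    (s : {s : A →ₐ[R] TwExt α // (piZero α).comp s.toRingHom = RingHom.id A}) :
    equivSections D = s ↔ ∀ x : A, s.1 x = Ideal.Quotient.mk (twIdeal α)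
      (Polynomial.C x + Polynomial.C (D.toFun x) * Polynomial.X) := by
  simp only [Subtype.ext_iff, AlgHom.ext_iff, equivSections_apply, eq_comm]

end AlphaDerivation

/-- The assignment sending an `α`-derivation `∂` of `A` over `R` to
`s : A → E^α(A)`, `s(x) = x + ∂(x)·T`, is well defined (each such `s` is an `R`-algebra
homomorphism with `π₀ ∘ s = id`), and it is a bijection onto the set of `R`-algebra
homomorphisms `s : A → E^α(A)` with `π₀ ∘ s = id`. -/
theorem alphaDerivation_equiv_sections (R A : Type*) [CommRing R] [CommRing A]
    [Algebra R A] (α : A) :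
    (∀ D : AlphaDerivation R A α, ∃ s : A →ₐ[R] TwExt α,
      (∀ x : A, s x = Ideal.Quotient.mk (twIdeal α)
        (Polynomial.C x + Polynomial.C (D.toFun x) * Polynomial.X)) ∧
      (piZero α).comp s.toRingHom = RingHom.id A) ∧
    (∀ s : A →ₐ[R] TwExt α, (piZero α).comp s.toRingHom = RingHom.id A →
      ∃! D : AlphaDerivation R A α,
        ∀ x : A, s x = Ideal.Quotient.mk (twIdeal α)
          (Polynomial.C x + Polynomial.C (D.toFun x) * Polynomial.X)) := by
  constructor
  · intro D
    exact ⟨(AlphaDerivation.equivSections D).1, AlphaDerivation.equivSections_apply D,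
      (AlphaDerivation.equivSections D).2⟩
  · intro s hs
    simpa only [AlphaDerivation.equivSections_eq_iff] using
      AlphaDerivation.equivSections.bijective.existsUnique ⟨s, hs⟩
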